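/- Let 𝒳 and 𝒴 be finite sets, p_X a pmf on 𝒳, n a positive integer, and y^n ∈ 𝒴^n a fixed sequence with empirical type q_Y. Let Z^n = (Z_1,…,Z_n) be i.i.d. with pmf p_X, independent of y^n. Let q be any joint pmf on 𝒳 × 𝒴 whose 𝒴-marginal equals q_Y and which is an achievable joint type for block length n. Then the probability that the joint empirical type of (Z^n, y^n) equals q is at most 2^{−n·D(q ‖ p_X ⊗ q_Y)}, where p_X ⊗ q_Y denotes the product pmf (x,y) ↦ p_X(x)q_Y(y). -/

import Mathlib

/-!
The proof is a change of measure. Let `W(a|b) = q(a,b) / q_Y(b)` be the conditional law of `q`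
and `L(a,b) = log₂ (q(a,b) / (p_X(a) q_Y(b)))` the summand of the divergence. At each position,
`p_X(z_t) ≤ W(z_t|y_t) · 2^{-L(z_t,y_t)}`, with equality unless `p_X(z_t) = 0`. If `(z, y)` has joint
type `q`, then `∑ t, L(z_t,y_t) = n · D(q ‖ p_X ⊗ q_Y)`, so the `p_X`-probability of `z` is at most
`2^{-nD} · ∏ t, W(z_t|y_t)`. Summing over `z` and using that `∏ t, W(·|y_t)` is a probability
distribution on `𝒳^n` gives the bound.
-/

open Finset

noncomputable section

/-- `p` is a probability mass function on the finite type `α`. -/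
def IsDist {α : Type} [Fintype α] (p : α → ℝ) : Prop :=
  (∀ a, 0 ≤ p a) ∧ ∑ a, p a = 1

/-- Kullback–Leibler divergence `D(q‖p)` in bits, with the conventions
`0·log₂(0/p) = 0` (and Lean's junk values when `q a > 0 = p a`, a case in which the
inequality below holds anyway since the corresponding probability is `0`). -/
def klBits {α : Type} [Fintype α] (q p : α → ℝ) : ℝ :=
  ∑ a, if q a = 0 then 0 else q a * Real.logb 2 (q a / p a)

/-- A sum along a pair of sequences depends only on their joint type. -/
lemma sum_eq_of_joint_type {𝒳 𝒴 : Type} [Fintype 𝒳] [DecidableEq 𝒳] [Fintype 𝒴] [DecidableEq 𝒴]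
    {n : ℕ} (z : Fin n → 𝒳) (y : Fin n → 𝒴) (q L : 𝒳 × 𝒴 → ℝ)
    (h : ∀ a b, ((Finset.univ.filter fun t => z t = a ∧ y t = b).card : ℝ) = n * q (a, b)) :
    ∑ t, L (z t, y t) = n * ∑ ab, q ab * L ab := by
  rw [← Finset.sum_fiberwise (s := Finset.univ) (g := fun t => (z t, y t)), Finset.mul_sum]
  refine Finset.sum_congr rfl fun ab _ => ?_
  obtain ⟨a, b⟩ := ab
  rw [Finset.sum_congr rfl (g := fun _ => L (a, b))
    (fun t ht => by rw [(Finset.mem_filter.mp ht).2])]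
  rw [Finset.sum_const, nsmul_eq_mul, ← mul_assoc, ← h a b]
  simp only [Prod.mk.injEq]

/-- The single-letter change of measure. The case `p = 0` costs the equality, since there the
logarithm takes a junk value. -/
lemma le_div_mul_two_rpow_neg_logb {p r s : ℝ} (hp : 0 ≤ p) (hr : 0 < r) (hs : 0 < s) :
    p ≤ r / s * (2 : ℝ) ^ (-Real.logb 2 (r / (p * s))) := by
  rcases hp.eq_or_lt with rfl | hp
  · positivity
  · rw [Real.rpow_neg (by norm_num), Real.rpow_logb (by norm_num) (by norm_num) (by positivity)]
    apply le_of_eq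
    field_simp

/-- If `Z^n` is i.i.d. `p_X` and `y^n` is a fixed sequence of empirical type
`q_Y`, then for any joint pmf `q` on `𝒳 × 𝒴` with `𝒴`-marginal `q_Y` which is an achievable
joint type for block length `n`, the probability that the joint empirical type of
`(Z^n, y^n)` equals `q` is at most `2^{-n·D(q ‖ p_X ⊗ q_Y)}`. -/
theorem stmt9 {𝒳 𝒴 : Type} [Fintype 𝒳] [DecidableEq 𝒳] [Fintype 𝒴] [DecidableEq 𝒴]
    (pX : 𝒳 → ℝ) (hpX : IsDist pX)
    (n : ℕ) (hn : 0 < n)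
    (y : Fin n → 𝒴)
    (qY : 𝒴 → ℝ)
    (hqY : ∀ b, ((Finset.univ.filter fun t => y t = b).card : ℝ) = n * qY b)
    (q : 𝒳 × 𝒴 → ℝ) (hq : IsDist q)
    (hmarg : ∀ b, ∑ a, q (a, b) = qY b)
    (hach : ∀ a b, ∃ m : ℕ, q (a, b) = (m : ℝ) / n) :
    (∑ z : Fin n → 𝒳, (∏ t, pX (z t)) *
        (if ∀ a b, ((Finset.univ.filter fun t => z t = a ∧ y t = b).card : ℝ) = n * q (a, b)
         then 1 else 0))
      ≤ (2 : ℝ) ^ (-(n : ℝ) * klBits q (fun ab => pX ab.1 * qY ab.2)) := by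
  have hn' : (0 : ℝ) < n := by exact_mod_cast hn
  have hqYpos : ∀ t, 0 < qY (y t) := fun t => by
    have hc : 0 < (Finset.univ.filter fun t' => y t' = y t).card :=
      Finset.card_pos.mpr ⟨t, by simp⟩
    have hc' : (0 : ℝ) < n * qY (y t) := by
      rw [← hqY]
      exact_mod_cast hc
    exact pos_of_mul_pos_right hc' hn'.le
  set D := klBits q (fun ab => pX ab.1 * qY ab.2) with hD
  have key : ∀ z : Fin n → 𝒳, (∏ t, pX (z t)) *
        (if ∀ a b, ((Finset.univ.filter fun t => z t = a ∧ y t = b).card : ℝ) = n * q (a, b)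
         then 1 else 0) ≤ (∏ t, q (z t, y t) / qY (y t)) * (2 : ℝ) ^ (-(n : ℝ) * D) := by
    intro z
    split_ifs with h
    · have hqpos : ∀ t, 0 < q (z t, y t) := fun t => by
        have hc : 0 < (Finset.univ.filter fun t' => z t' = z t ∧ y t' = y t).card :=
          Finset.card_pos.mpr ⟨t, by simp⟩
        have hc' : (0 : ℝ) < n * q (z t, y t) := by
          rw [← h]
          exact_mod_cast hc
        exact pos_of_mul_pos_right hc' hn'.le
      have hsum : ∑ t, Real.logb 2 (q (z t, y t) / (pX (z t) * qY (y t))) = n * D := by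
        rw [sum_eq_of_joint_type z y q
          (fun ab => Real.logb 2 (q ab / (pX ab.1 * qY ab.2))) h, hD, klBits]
        congr 1
        refine Finset.sum_congr rfl fun ab _ => ?_
        split_ifs with h0
        · rw [h0, zero_mul]
        · rfl
      rw [mul_one, neg_mul, ← hsum, ← Finset.sum_neg_distrib,
        Real.rpow_sum_of_pos (by norm_num), ← Finset.prod_mul_distrib]
      exact Finset.prod_le_prod (fun t _ => hpX.1 _) fun t _ =>
        le_div_mul_two_rpow_neg_logb (hpX.1 _) (hqpos t) (hqYpos t)
    · rw [mul_zero]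
      exact mul_nonneg (Finset.prod_nonneg fun t _ => div_nonneg (hq.1 _) (hqYpos t).le)
        (by positivity)
  have htotal : ∑ z : Fin n → 𝒳, ∏ t, q (z t, y t) / qY (y t) = 1 := by
    rw [← Fintype.prod_sum (fun t a => q (a, y t) / qY (y t))]
    refine Finset.prod_eq_one fun t _ => ?_
    rw [← Finset.sum_div, hmarg, div_self (hqYpos t).ne']
  refine (Finset.sum_le_sum fun z _ => key z).trans_eq ?_
  rw [← Finset.sum_mul, htotal, one_mul]

end
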